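/- There exist no smooth functions α₁, α₂, λ : I → ℝ on a nonempty open interval I with α₁'(s)² + α₂'(s)² = 1 and sinh(α₁(s)) > 0 for all s ∈ I that satisfy equations (H1), (H2) and (H3) on I; that is, no hypersurface of H³ × ℝ of the given form admits an almost Ricci soliton with potential vector field T. -/

import Mathlib

/-!
Write `a = α₁'`, `b = α₂'`. Since `coth ≠ tanh`, subtracting (H2) from (H3) forces `a' = a b`, and
hence `λ = 2 b²`. Differentiating `a² + b² = 1` gives `b (a² + b') = 0`, while (H1) becomes
`b' = a b (tanh α₁ + coth α₁) + 2`.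

* `b` never vanishes: where `b = 0`, (H1) gives `b' = 2`, whereas the derivative of
  `b (a² + b') = 0` is `b' (a² + b') = 0`, i.e. `2 * 3 = 0`. Hence `b' = -a²` everywhere.
* (H1) is now `a b (sinh² + cosh²) + (2 + a²) sinh cosh = 0` (at `α₁`). So `a ≠ 0`, and eliminating
  the hyperbolic functions between this relation and its derivative leaves
  `5 u² - 5 u + 6 = 0` for `u = a²`, which has no real root.
-/

/-- The hyperbolic cotangent `coth x = cosh x / sinh x`. -/
noncomputable def Real.coth (x : ℝ) : ℝ := Real.cosh x / Real.sinh x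

lemma deriv_eq_zero_of_zero_on {I : Set ℝ} (hI : IsOpen I) {f : ℝ → ℝ} {f' t : ℝ} (ht : t ∈ I)
    (h0 : ∀ s ∈ I, f s = 0) (hf : HasDerivAt f f' t) : f' = 0 := by
  have h : f =ᶠ[nhds t] fun _ => (0 : ℝ) := by
    filter_upwards [hI.mem_nhds ht] with s hs using h0 s hs
  exact hf.unique ((hasDerivAt_const t (0 : ℝ)).congr_of_eventuallyEq h)

/-- there exist no smooth functions `α₁, α₂, λ` on a nonempty open
interval `I` with `(α₁')² + (α₂')² = 1` and `sinh(α₁) > 0` on `I` satisfying (H1),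
(H2) and (H3); i.e. no hypersurface of `H³ × ℝ` of the given form admits an almost
Ricci soliton with potential vector field `T`. -/
theorem stmt18 :
    ¬ ∃ (I : Set ℝ) (α₁ α₂ lam : ℝ → ℝ),
      IsOpen I ∧ I.Nonempty ∧ I.OrdConnected ∧
      ContDiff ℝ (⊤ : ℕ∞) α₁ ∧ ContDiff ℝ (⊤ : ℕ∞) α₂ ∧ ContDiff ℝ (⊤ : ℕ∞) lam ∧
      (∀ s ∈ I, (deriv α₁ s) ^ 2 + (deriv α₂ s) ^ 2 = 1) ∧
      (∀ s ∈ I, 0 < Real.sinh (α₁ s)) ∧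
      (∀ s ∈ I, deriv (deriv α₂) s
        - deriv (deriv α₁) s * (Real.tanh (α₁ s) + Real.coth (α₁ s))
        - 2 * (deriv α₁ s) ^ 2 = lam s) ∧
      (∀ s ∈ I, (deriv α₁ s * deriv α₂ s - deriv (deriv α₁) s) * Real.tanh (α₁ s)
        + 2 * (deriv α₂ s) ^ 2 = lam s) ∧
      (∀ s ∈ I, (deriv α₁ s * deriv α₂ s - deriv (deriv α₁) s) * Real.coth (α₁ s)
        + 2 * (deriv α₂ s) ^ 2 = lam s) := by
  rintro ⟨I, x, y, lam, hI, ⟨t, ht⟩, -, hx, hy, -, hu, hs, h1, h2, h3⟩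
  have hx1 : ContDiff ℝ (⊤ : ℕ∞) (deriv x) := (contDiff_infty_iff_deriv.1 hx).2
  have hy1 : ContDiff ℝ (⊤ : ℕ∞) (deriv y) := (contDiff_infty_iff_deriv.1 hy).2
  have hy2 : ContDiff ℝ (⊤ : ℕ∞) (deriv (deriv y)) := (contDiff_infty_iff_deriv.1 hy1).2
  have dx (s : ℝ) : HasDerivAt x (deriv x s) s :=
    (hx.differentiable (by simp) s).hasDerivAt
  have da (s : ℝ) : HasDerivAt (deriv x) (deriv (deriv x) s) s :=
    (hx1.differentiable (by simp) s).hasDerivAt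
  have db (s : ℝ) : HasDerivAt (deriv y) (deriv (deriv y) s) s :=
    (hy1.differentiable (by simp) s).hasDerivAt
  have db' (s : ℝ) : HasDerivAt (deriv (deriv y)) (deriv (deriv (deriv y)) s) s :=
    (hy2.differentiable (by simp) s).hasDerivAt
  generalize deriv x = a at *
  generalize deriv y = b at *
  have ha' : ∀ s ∈ I, deriv a s = a s * b s := by
    intro s hsI
    have hS := hs s hsI
    have hC := Real.cosh_pos (x s)
    have e := (h3 s hsI).trans (h2 s hsI).symm
    have hne : Real.coth (x s) - Real.tanh (x s) ≠ 0 := by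
      have : Real.coth (x s) - Real.tanh (x s) = 1 / (Real.sinh (x s) * Real.cosh (x s)) := by
        rw [Real.coth, Real.tanh_eq_sinh_div_cosh]
        field_simp
        linarith [Real.cosh_sq (x s)]
      rw [this]
      positivity
    have : (a s * b s - deriv a s) * (Real.coth (x s) - Real.tanh (x s)) = 0 := by linarith
    have := (mul_eq_zero.1 this).resolve_right hne
    linarith
  have hbb : ∀ s ∈ I, b s * (a s ^ 2 + deriv b s) = 0 := by
    intro s hsI
    have := deriv_eq_zero_of_zero_on hI hsI
      (f := fun s => a s ^ 2 + b s ^ 2 - 1) (fun r hr => by linarith [hu r hr])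
      ((((da s).fun_pow 2).add ((db s).fun_pow 2)).sub_const 1)
    rw [ha' s hsI] at this
    norm_num at this
    linarith
  have hT : ∀ s ∈ I, deriv b s = a s * b s * (Real.tanh (x s) + Real.coth (x s)) + 2 := by
    intro s hsI
    have e1 := h1 s hsI
    have e2 := h2 s hsI
    rw [ha' s hsI] at e1 e2
    linarith [hu s hsI]
  have hb' : ∀ s ∈ I, deriv b s = -a s ^ 2 := by
    intro s hsI
    have hb : b s ≠ 0 := by
      intro h0
      have e := deriv_eq_zero_of_zero_on hI hsI hbb
        ((db s).mul (((da s).fun_pow 2).add (db' s)))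
      have e1 := hT s hsI
      have e2 := hu s hsI
      simp only [h0] at e e1 e2
      norm_num at e e1 e2
      rw [e1] at e
      norm_num at e
      nlinarith
    have := (mul_eq_zero.1 (hbb s hsI)).resolve_left hb
    linarith
  have hF : ∀ s ∈ I, a s * b s * (Real.sinh (x s) ^ 2 + Real.cosh (x s) ^ 2)
      + (2 + a s ^ 2) * (Real.sinh (x s) * Real.cosh (x s)) = 0 := by
    intro s hsI
    have hS := (hs s hsI).ne'
    have hC := (Real.cosh_pos (x s)).ne'
    have e := hT s hsI
    rw [hb' s hsI, Real.coth, Real.tanh_eq_sinh_div_cosh] at e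
    field_simp at e
    linear_combination -e
  have hD := deriv_eq_zero_of_zero_on hI ht hF
    ((((da t).mul (db t)).mul (((dx t).sinh.fun_pow 2).add ((dx t).cosh.fun_pow 2))).add
      ((((da t).fun_pow 2).const_add 2).mul ((dx t).sinh.mul (dx t).cosh)))
  have hF := hF t ht
  have hU := hu t ht
  have hS := hs t ht
  have hC := Real.cosh_pos (x t)
  rw [ha' t ht, hb' t ht] at hD
  simp only [Pi.mul_apply, Pi.add_apply] at hD
  norm_num at hD
  generalize Real.sinh (x t) = S at *
  generalize Real.cosh (x t) = C at *
  generalize a t = A at *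
  generalize b t = B at *
  have hQ : 0 < S * C := mul_pos hS hC
  have hA : A ≠ 0 := by
    rintro rfl
    nlinarith
  have hD' : (B ^ 2 + 2) * (S ^ 2 + C ^ 2) + 6 * A * B * (S * C) = 0 := by
    apply mul_left_cancel₀ hA
    linear_combination hD
  have key : S * C * (6 * A ^ 2 * B ^ 2 - (B ^ 2 + 2) * (2 + A ^ 2)) = 0 := by
    linear_combination A * B * hD' - (B ^ 2 + 2) * hF
  have := (mul_eq_zero.1 key).resolve_left hQ.ne'
  have hB : B ^ 2 = 1 - A ^ 2 := by linarith
  rw [hB] at this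
  -- The discriminant of `5 u² - 5 u + 6`, with `u = A²`, is negative.
  nlinarith [sq_nonneg (2 * A ^ 2 - 1)]
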